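/- Let n ≥ 1, let p_param : ℝ^n → [0,∞) be a probability density with respect to Lebesgue measure, let f, f_param : [0,2π] → (0,∞), set C = C_n(f, f_param), and define the corrected density p^C(z) := det(C)^{−1/2} p_param(F_n^T C^{−1/2} F_n z). Then for every 0 ≤ j ≤ ⌊n/2⌋, the expected periodogram under the corrected likelihood satisfies the exact identity ∫_{ℝ^n} I_{n,λ_j}(z) p^C(z) dz = (f(λ_j)/f_param(λ_j)) ∫_{ℝ^n} I_{n,λ_j}(z) p_param(z) dz (as an identity of Lebesgue integrals with values in [0,∞]). -/

import Mathlib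

open MeasureTheory Matrix Filter

/-- The `j`-th Fourier frequency `λ_j = 2πj/n`. -/
noncomputable def fourierFreq (n j : ℕ) : ℝ := 2 * Real.pi * j / n

/-- The periodogram `I_{n,λ}(z) = (2πn)⁻¹ |∑_{t=1}^n z_t e^{-itλ}|²`. -/
noncomputable def periodogram (n : ℕ) (lam : ℝ) (z : Fin n → ℝ) : ℝ :=
  1 / (2 * Real.pi * n) *
    Complex.normSq (∑ t : Fin n, (z t : ℂ) *
      Complex.exp (-Complex.I * (((t : ℕ) + 1 : ℕ) : ℂ) * (lam : ℂ)))

/-- The real orthogonal Fourier transform matrix `F_n` with rows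
`e_0, c_1, s_1, …, c_N, s_N` (and additionally `e_{n/2}` as last row for `n` even). -/
noncomputable def Fmat (n : ℕ) : Matrix (Fin n) (Fin n) ℝ :=
  Matrix.of fun r t : Fin n =>
    if r.val = 0 then 1 / Real.sqrt n
    else if n % 2 = 0 ∧ r.val = n - 1 then (-1 : ℝ) ^ ((t : ℕ) + 1) / Real.sqrt n
    else if r.val % 2 = 1 then
      Real.sqrt 2 / Real.sqrt n *
        Real.cos (2 * Real.pi * (((r.val + 1) / 2 : ℕ) : ℝ) * (((t : ℕ) + 1 : ℕ) : ℝ) / n)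
    else
      -(Real.sqrt 2 / Real.sqrt n) *
        Real.sin (2 * Real.pi * ((r.val / 2 : ℕ) : ℝ) * (((t : ℕ) + 1 : ℕ) : ℝ) / n)

/-- The diagonal matrix `D_n(f)` with entries `2πf(λ_0), 2πf(λ_1), 2πf(λ_1), …`
matching the row ordering of `F_n`. -/
noncomputable def Dmat (n : ℕ) (f : ℝ → ℝ) : Matrix (Fin n) (Fin n) ℝ :=
  Matrix.diagonal fun r : Fin n => 2 * Real.pi * f (fourierFreq n ((r.val + 1) / 2))

/-- The diagonal correction matrix `C_n(f, f_param)` with entries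
`c(λ_0), c(λ_1), c(λ_1), …` where `c = f/f_param`, matching the row ordering of `F_n`. -/
noncomputable def Cmat (n : ℕ) (f fp : ℝ → ℝ) : Matrix (Fin n) (Fin n) ℝ :=
  Matrix.diagonal fun r : Fin n =>
    f (fourierFreq n ((r.val + 1) / 2)) / fp (fourierFreq n ((r.val + 1) / 2))

/-- Entrywise real power of the diagonal of a matrix: for a diagonal matrix `A` with
positive entries, `diagRPow n A (-(1/2))` is `A^{-1/2}` etc. -/
noncomputable def diagRPow (n : ℕ) (A : Matrix (Fin n) (Fin n) ℝ) (p : ℝ) :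
    Matrix (Fin n) (Fin n) ℝ :=
  Matrix.diagonal fun i => A i i ^ p

/-!
A matrix `M = F_nᵀ D F_n` with `D` diagonal and constant on each pair `c_j, s_j` multiplies the
cosine and sine coefficients of `z` at `λ_j` by the same factor `d_j`, hence the periodogram at
`λ_j` by `d_j²`. For `D = C^{-1/2}` this says `I(z) = (f(λ_j) / f_param(λ_j)) I(M z)`, while
`det M` is the normalizing factor `det(C)^{-1/2}`, so the change of variables `z ↦ M z` gives the
identity.

To check orthogonality of `F_n`, all its rows are written as multiples of sinusoids
`cos (t λ_k + φ)` with `φ ∈ {0, π / 2}`: a product of two such is a sum of two sinusoids, whose sums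
over `t` are governed by sums of powers of an `n`-th root of unity.
-/

lemma lintegral_abs_det_mul_comp {E : Type*} [NormedAddCommGroup E] [NormedSpace ℝ E]
    [FiniteDimensional ℝ E] [MeasurableSpace E] [BorelSpace E] (μ : Measure E)
    [μ.IsAddHaarMeasure] {L : E →ₗ[ℝ] E} (hL : LinearMap.det L ≠ 0) (g : E → ENNReal) :
    ∫⁻ x, ENNReal.ofReal |LinearMap.det L| * g (L x) ∂μ = ∫⁻ x, g x ∂μ := by
  let e := LinearMap.equivOfDetNeZero L hL
  have himage : L '' Set.univ = Set.univ := Set.image_univ_of_surjective e.surjective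
  have hchange := lintegral_image_eq_lintegral_abs_det_fderiv_mul μ MeasurableSet.univ
    (fun x _ ↦ L.toContinuousLinearMap.hasFDerivAt.hasFDerivWithinAt) e.injective.injOn g
  simpa [himage] using hchange.symm

section Sinusoids

lemma sum_pow_succ_eq_zero {R : Type*} [Ring R] [NoZeroDivisors R] {n : ℕ} {x : R}
    (hx : x ^ n = 1) (hx1 : x ≠ 1) : ∑ t : Fin n, x ^ ((t : ℕ) + 1) = 0 := by
  have hmul : (∑ i ∈ Finset.range n, x ^ i) * (x - 1) = 0 := by rw [geom_sum_mul, hx, sub_self]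
  have hgeom := (mul_eq_zero.1 hmul).resolve_right (sub_ne_zero.2 hx1)
  simp only [pow_succ]
  rw [← Finset.sum_mul, Fin.sum_univ_eq_sum_range (fun t ↦ x ^ t) n, hgeom, zero_mul]

/-- The sinusoid `t ↦ cos (t lam + φ)` sampled at times `t = 1, …, n`, so that the entry with index
`t : Fin n` is taken at time `t + 1`. The phases `0` and `π / 2` give the cosine and minus the sine,
which are, up to normalization, the vectors `c_j` and `s_j` when `lam = λ_j`. -/
noncomputable def sampledCos (n : ℕ) (lam φ : ℝ) : Fin n → ℝ :=
  fun t ↦ Real.cos (((t : ℕ) + 1 : ℕ) * lam + φ)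

lemma sampledCos_eq_re (n : ℕ) (lam φ : ℝ) (t : Fin n) :
    sampledCos n lam φ t =
      (Complex.exp (lam * Complex.I) ^ ((t : ℕ) + 1) * Complex.exp (φ * Complex.I)).re := by
  rw [sampledCos, ← Complex.exp_nat_mul, ← Complex.exp_add, ← Complex.exp_ofReal_mul_I_re]
  congr 2
  push_cast
  ring

lemma sum_sampledCos {n : ℕ} {lam : ℝ} (h : Complex.exp (lam * Complex.I) ^ n = 1) (φ : ℝ) :
    ∑ t, sampledCos n lam φ t =
      if Complex.exp (lam * Complex.I) = 1 then n * Real.cos φ else 0 := by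
  simp_rw [sampledCos_eq_re]
  rw [← Complex.re_sum, ← Finset.sum_mul]
  split_ifs with h1
  · simp [h1, Complex.exp_ofReal_mul_I_re]
  · rw [sum_pow_succ_eq_zero h h1, zero_mul, Complex.zero_re]

lemma sampledCos_mul_sampledCos (n : ℕ) (lam φ mu ψ : ℝ) (t : Fin n) :
    sampledCos n lam φ t * sampledCos n mu ψ t =
      (sampledCos n (lam + mu) (φ + ψ) t + sampledCos n (lam - mu) (φ - ψ) t) / 2 := by
  set x : ℝ := ((t : ℕ) + 1 : ℕ) * lam + φ
  set y : ℝ := ((t : ℕ) + 1 : ℕ) * mu + ψ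
  have hadd : sampledCos n (lam + mu) (φ + ψ) t = Real.cos (x + y) := by
    rw [sampledCos]; congr 1; ring
  have hsub : sampledCos n (lam - mu) (φ - ψ) t = Real.cos (x - y) := by
    rw [sampledCos]; congr 1; ring
  rw [hadd, hsub, Real.cos_add, Real.cos_sub, sampledCos, sampledCos]
  ring

lemma periodogram_eq (n : ℕ) (lam : ℝ) (z : Fin n → ℝ) :
    periodogram n lam z = 1 / (2 * Real.pi * n) *
      ((sampledCos n lam 0 ⬝ᵥ z) ^ 2 + (sampledCos n lam (Real.pi / 2) ⬝ᵥ z) ^ 2) := by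
  have hexp (t : Fin n) :
      Complex.exp (-Complex.I * (((t : ℕ) + 1 : ℕ) : ℂ) * (lam : ℂ)) =
        Complex.exp ((-(((t : ℕ) + 1 : ℕ) * lam) : ℝ) * Complex.I) := by
    congr 1
    push_cast
    ring
  simp only [periodogram, Complex.normSq_apply, Complex.re_sum, Complex.im_sum, hexp,
    Complex.re_ofReal_mul, Complex.im_ofReal_mul, Complex.exp_ofReal_mul_I_re,
    Complex.exp_ofReal_mul_I_im, Real.cos_neg, Real.sin_neg, dotProduct, sampledCos, add_zero,
    Real.cos_add_pi_div_two, mul_comm (z _)]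
  ring

end Sinusoids

section FourierFrequencies

variable {n : ℕ}

lemma fourierFreq_mem_Icc {j : ℕ} (hj : j ≤ n) : fourierFreq n j ∈ Set.Icc 0 (2 * Real.pi) := by
  refine ⟨by unfold fourierFreq; positivity, ?_⟩
  rw [fourierFreq, mul_div_assoc]
  exact mul_le_of_le_one_right Real.two_pi_pos.le
    (div_le_one_of_le₀ (by exact_mod_cast hj) n.cast_nonneg)

lemma exp_fourierFreq_mul_I (n j : ℕ) :
    Complex.exp (fourierFreq n j * Complex.I) =
      Complex.exp (2 * Real.pi * Complex.I / n) ^ j := by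
  rw [← Complex.exp_nat_mul, fourierFreq]
  congr 1
  push_cast
  ring

lemma sampledCos_dotProduct_sampledCos (hn : n ≠ 0) (j k : ℕ) (φ ψ : ℝ) :
    sampledCos n (fourierFreq n j) φ ⬝ᵥ sampledCos n (fourierFreq n k) ψ =
      n / 2 * ((if n ∣ j + k then Real.cos (φ + ψ) else 0) +
        if j ≡ k [MOD n] then Real.cos (φ - ψ) else 0) := by
  have hζ := Complex.isPrimitiveRoot_exp n hn
  set ζ := Complex.exp (2 * Real.pi * Complex.I / n)
  have hadd : Complex.exp ((fourierFreq n j + fourierFreq n k : ℝ) * Complex.I) = ζ ^ (j + k) := by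
    rw [Complex.ofReal_add, add_mul, Complex.exp_add, exp_fourierFreq_mul_I,
      exp_fourierFreq_mul_I, pow_add]
  have hsub : Complex.exp ((fourierFreq n j - fourierFreq n k : ℝ) * Complex.I) =
      ζ ^ j / ζ ^ k := by
    rw [Complex.ofReal_sub, sub_mul, Complex.exp_sub, exp_fourierFreq_mul_I,
      exp_fourierFreq_mul_I]
  have hpow (i : ℕ) : (ζ ^ i) ^ n = 1 := by rw [pow_right_comm, hζ.pow_eq_one, one_pow]
  have hmod : ζ ^ j / ζ ^ k = 1 ↔ j ≡ k [MOD n] := by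
    rw [div_eq_one_iff_eq (pow_ne_zero k (hζ.ne_zero hn)),
      (hζ.isOfFinOrder hn).pow_eq_pow_iff_modEq, ← hζ.eq_orderOf]
  simp only [dotProduct, sampledCos_mul_sampledCos]
  rw [← Finset.sum_div, Finset.sum_add_distrib, sum_sampledCos (by rw [hadd, hpow]),
    sum_sampledCos (by rw [hsub, div_pow, hpow, hpow, div_one])]
  simp only [hadd, hsub, hζ.pow_eq_one_iff_dvd, hmod]
  split_ifs <;> ring

lemma sampledCos_fourierFreq_pi_div_two {j : ℕ} (hj : n ∣ 2 * j) :
    sampledCos n (fourierFreq n j) (Real.pi / 2) = 0 := by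
  funext t
  have hn : (n : ℝ) ≠ 0 := by exact_mod_cast t.pos.ne'
  obtain ⟨m, hm⟩ := hj
  have hfreq : fourierFreq n j = m * Real.pi := by
    have hm' : (2 : ℝ) * j = n * m := by exact_mod_cast hm
    rw [fourierFreq, div_eq_iff hn]
    linear_combination Real.pi * hm'
  rw [sampledCos, Real.cos_add_pi_div_two, hfreq, ← mul_assoc, ← Nat.cast_mul,
    Real.sin_nat_mul_pi, neg_zero, Pi.zero_apply]

end FourierFrequencies

section FourierMatrix

variable {n : ℕ}

/-- The factor that makes the rows of `F_n` with frequency `λ_k` unit vectors. The condition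
`n ∣ 2 * k` singles out the frequencies in `π ℤ`, those of the rows `e_0` and `e_{n/2}`. -/
noncomputable def rowAmplitude (n k : ℕ) : ℝ :=
  if n ∣ 2 * k then 1 / Real.sqrt n else Real.sqrt 2 / Real.sqrt n

/-- The phase of the sinusoid in row `r` of `F_n`: `0` for the rows `e_0`, `c_j`, `e_{n/2}` and
`π / 2` for the rows `s_j`. -/
noncomputable def rowPhase (r : ℕ) : ℝ :=
  if r = 0 ∨ r % 2 = 1 then 0 else Real.pi / 2

lemma rowAmplitude_mul_self (n k : ℕ) :
    rowAmplitude n k * rowAmplitude n k = if n ∣ 2 * k then 1 / (n : ℝ) else 2 / n := by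
  unfold rowAmplitude
  split_ifs <;> rw [div_mul_div_comm, Real.mul_self_sqrt n.cast_nonneg]
  · rw [mul_one]
  · rw [Real.mul_self_sqrt zero_le_two]

lemma rowAmplitude_ne_zero (hn : n ≠ 0) (k : ℕ) : rowAmplitude n k ≠ 0 := by
  have hsqrt : Real.sqrt n ≠ 0 := Real.sqrt_ne_zero'.2 (by exact_mod_cast hn.pos)
  unfold rowAmplitude
  split_ifs
  · exact one_div_ne_zero hsqrt
  · exact div_ne_zero (Real.sqrt_ne_zero'.2 zero_lt_two) hsqrt

lemma dvd_two_mul_row_iff (r : Fin n) :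
    n ∣ 2 * (((r : ℕ) + 1) / 2) ↔ (r : ℕ) = 0 ∨ n % 2 = 0 ∧ (r : ℕ) = n - 1 := by
  have hr := r.isLt
  constructor
  · intro h
    rcases Nat.eq_zero_or_pos (2 * (((r : ℕ) + 1) / 2)) with h0 | hpos
    · omega
    · have := Nat.le_of_dvd hpos h
      omega
  · rintro (h | h)
    · simp [h]
    · exact dvd_of_eq (by omega)

lemma Fmat_row (r : Fin n) :
    Fmat n r = rowAmplitude n (((r : ℕ) + 1) / 2) •
      sampledCos n (fourierFreq n (((r : ℕ) + 1) / 2)) (rowPhase r) := by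
  funext t
  have hn : (n : ℝ) ≠ 0 := by exact_mod_cast r.pos.ne'
  simp only [Fmat, Matrix.of_apply, Pi.smul_apply, smul_eq_mul, rowAmplitude, dvd_two_mul_row_iff,
    rowPhase, sampledCos, fourierFreq]
  by_cases hzero : (r : ℕ) = 0
  · simp [hzero]
  by_cases hlast : n % 2 = 0 ∧ (r : ℕ) = n - 1
  · have hodd : (r : ℕ) % 2 = 1 := by omega
    have hk : (2 : ℝ) * ((((r : ℕ) + 1) / 2 : ℕ) : ℝ) = n := by
      exact_mod_cast (by omega : 2 * (((r : ℕ) + 1) / 2) = n)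
    have hfreq : 2 * Real.pi * ((((r : ℕ) + 1) / 2 : ℕ) : ℝ) / n = Real.pi := by
      rw [div_eq_iff hn]
      linear_combination Real.pi * hk
    rw [if_neg hzero, if_pos hlast, if_pos (Or.inr hlast), if_pos (Or.inr hodd), hfreq, add_zero,
      Real.cos_nat_mul_pi]
    ring
  rw [if_neg hzero, if_neg hlast, if_neg (not_or_intro hzero hlast)]
  by_cases hodd : (r : ℕ) % 2 = 1
  · rw [if_pos hodd, if_pos (Or.inr hodd), add_zero]
    ring_nf
  · rw [if_neg hodd, if_neg (not_or_intro hzero hodd), Real.cos_add_pi_div_two,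
      show ((r : ℕ) + 1) / 2 = (r : ℕ) / 2 by omega]
    ring_nf

lemma Fmat_dotProduct_self (r : Fin n) : Fmat n r ⬝ᵥ Fmat n r = 1 := by
  have hn : (n : ℝ) ≠ 0 := by exact_mod_cast r.pos.ne'
  rw [Fmat_row, smul_dotProduct, dotProduct_smul, smul_smul, rowAmplitude_mul_self,
    sampledCos_dotProduct_sampledCos r.pos.ne', ← two_mul, if_pos (Nat.ModEq.refl _), sub_self,
    Real.cos_zero, smul_eq_mul]
  by_cases hdvd : n ∣ 2 * (((r : ℕ) + 1) / 2)
  · have hphase : rowPhase r = 0 := if_pos (by have := (dvd_two_mul_row_iff r).1 hdvd; omega)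
    rw [if_pos hdvd, if_pos hdvd, hphase, add_zero, Real.cos_zero]
    field_simp
    norm_num
  · rw [if_neg hdvd, if_neg hdvd]
    field_simp
    norm_num

lemma cos_rowPhase_sub_rowPhase {r s : ℕ} (hrs : r ≠ s) (h : (r + 1) / 2 = (s + 1) / 2) :
    Real.cos (rowPhase r - rowPhase s) = 0 := by
  unfold rowPhase
  by_cases hodd : r % 2 = 1
  · rw [if_pos (Or.inr hodd), if_neg (by omega), zero_sub, Real.cos_neg, Real.cos_pi_div_two]
  · rw [if_neg (by omega), if_pos (by omega), sub_zero, Real.cos_pi_div_two]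

lemma Fmat_dotProduct_of_ne {r s : Fin n} (hrs : r ≠ s) : Fmat n r ⬝ᵥ Fmat n s = 0 := by
  have hr := r.isLt
  have hs := s.isLt
  have hrs' : (r : ℕ) ≠ s := Fin.val_ne_of_ne hrs
  have hadd : ¬ n ∣ ((r : ℕ) + 1) / 2 + ((s : ℕ) + 1) / 2 := fun h ↦ by
    have := Nat.le_of_dvd (by omega) h
    omega
  rw [Fmat_row, Fmat_row, smul_dotProduct, dotProduct_smul,
    sampledCos_dotProduct_sampledCos r.pos.ne', if_neg hadd, zero_add]
  split_ifs with hmod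
  · rw [cos_rowPhase_sub_rowPhase hrs' (hmod.eq_of_lt_of_lt (by omega) (by omega))]
    simp only [mul_zero, smul_zero]
  · simp only [mul_zero, smul_zero]

lemma Fmat_mul_transpose (n : ℕ) : Fmat n * (Fmat n)ᵀ = 1 := by
  ext r s
  rw [Matrix.mul_apply_eq_vecMul, Matrix.one_apply]
  change Fmat n r ⬝ᵥ Fmat n s = _
  split_ifs with hrs
  · rw [hrs, Fmat_dotProduct_self]
  · exact Fmat_dotProduct_of_ne hrs

end FourierMatrix

section FourierMultiplier

variable {n : ℕ}

/-- The operator `F_nᵀ D F_n` that multiplies the component of a vector at each Fourier frequency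
`λ_k`, `0 ≤ k ≤ n / 2`, by `d k`; the two rows `c_k`, `s_k` of `F_n` share the factor `d k`. -/
noncomputable def fourierMultiplier (n : ℕ) (d : ℕ → ℝ) : Matrix (Fin n) (Fin n) ℝ :=
  (Fmat n)ᵀ * Matrix.diagonal (fun r : Fin n ↦ d (((r : ℕ) + 1) / 2)) * Fmat n

lemma det_fourierMultiplier (n : ℕ) (d : ℕ → ℝ) :
    (fourierMultiplier n d).det = ∏ r : Fin n, d (((r : ℕ) + 1) / 2) := by
  rw [fourierMultiplier, Matrix.det_conj_of_mul_eq_one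
    (mul_eq_one_comm.1 (Fmat_mul_transpose n)) (Fmat_mul_transpose n), Matrix.det_diagonal]

lemma Fmat_mul_fourierMultiplier (n : ℕ) (d : ℕ → ℝ) :
    Fmat n * fourierMultiplier n d =
      Matrix.diagonal (fun r : Fin n ↦ d (((r : ℕ) + 1) / 2)) * Fmat n := by
  rw [fourierMultiplier, ← Matrix.mul_assoc, ← Matrix.mul_assoc, Fmat_mul_transpose,
    Matrix.one_mul]

lemma sampledCos_row_vecMul_fourierMultiplier (d : ℕ → ℝ) (r : Fin n) :
    sampledCos n (fourierFreq n (((r : ℕ) + 1) / 2)) (rowPhase r) ᵥ* fourierMultiplier n d =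
      d (((r : ℕ) + 1) / 2) • sampledCos n (fourierFreq n (((r : ℕ) + 1) / 2)) (rowPhase r) := by
  have hrow : Fmat n r ᵥ* fourierMultiplier n d = d (((r : ℕ) + 1) / 2) • Fmat n r := by
    rw [← Matrix.mul_apply_eq_vecMul, Fmat_mul_fourierMultiplier]
    funext t
    rw [Matrix.diagonal_mul, Pi.smul_apply, smul_eq_mul]
  rw [Fmat_row, Matrix.smul_vecMul, smul_comm] at hrow
  exact smul_right_injective _ (rowAmplitude_ne_zero r.pos.ne' _) hrow

lemma sampledCos_zero_vecMul_fourierMultiplier (hn : n ≠ 0) (d : ℕ → ℝ) {j : ℕ} (hj : j ≤ n / 2) :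
    sampledCos n (fourierFreq n j) 0 ᵥ* fourierMultiplier n d =
      d j • sampledCos n (fourierFreq n j) 0 := by
  have hphase : rowPhase (2 * j - 1) = 0 := if_pos (by omega)
  have hfreq : (2 * j - 1 + 1) / 2 = j := by omega
  simpa only [hphase, hfreq] using
    sampledCos_row_vecMul_fourierMultiplier d (⟨2 * j - 1, by omega⟩ : Fin n)

lemma sampledCos_pi_div_two_vecMul_fourierMultiplier (d : ℕ → ℝ) {j : ℕ} (hj : j ≤ n / 2) :
    sampledCos n (fourierFreq n j) (Real.pi / 2) ᵥ* fourierMultiplier n d =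
      d j • sampledCos n (fourierFreq n j) (Real.pi / 2) := by
  by_cases hdvd : n ∣ 2 * j
  · rw [sampledCos_fourierFreq_pi_div_two hdvd, Matrix.zero_vecMul, smul_zero]
  · have hj0 : j ≠ 0 := by rintro rfl; exact hdvd (dvd_zero n)
    have hlt : 2 * j < n := lt_of_le_of_ne (by omega) fun h ↦ hdvd (dvd_of_eq h.symm)
    have hphase : rowPhase (2 * j) = Real.pi / 2 := if_neg (by omega)
    have hfreq : (2 * j + 1) / 2 = j := by omega
    simpa only [hphase, hfreq] using
      sampledCos_row_vecMul_fourierMultiplier d (⟨2 * j, hlt⟩ : Fin n)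

lemma periodogram_fourierMultiplier_mulVec (hn : n ≠ 0) (d : ℕ → ℝ) {j : ℕ} (hj : j ≤ n / 2)
    (z : Fin n → ℝ) :
    periodogram n (fourierFreq n j) (fourierMultiplier n d *ᵥ z) =
      d j ^ 2 * periodogram n (fourierFreq n j) z := by
  simp only [periodogram_eq, Matrix.dotProduct_mulVec,
    sampledCos_zero_vecMul_fourierMultiplier hn d hj,
    sampledCos_pi_div_two_vecMul_fourierMultiplier d hj, smul_dotProduct, smul_eq_mul]
  ring

end FourierMultiplier

section Correction

variable {n : ℕ} {f fp : ℝ → ℝ}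

lemma diagRPow_Cmat_conj (n : ℕ) (f fp : ℝ → ℝ) (s : ℝ) :
    (Fmat n)ᵀ * diagRPow n (Cmat n f fp) s * Fmat n =
      fourierMultiplier n fun k ↦ (f (fourierFreq n k) / fp (fourierFreq n k)) ^ s := by
  simp only [fourierMultiplier, diagRPow, Cmat, Matrix.diagonal_apply_eq]

lemma det_Cmat_pos (hc : ∀ k ≤ n / 2, 0 < f (fourierFreq n k) / fp (fourierFreq n k)) :
    0 < (Cmat n f fp).det := by
  rw [Cmat, Matrix.det_diagonal]
  exact Finset.prod_pos fun r _ ↦ hc _ (by omega)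

lemma det_diagRPow_Cmat_conj
    (hc : ∀ k ≤ n / 2, 0 < f (fourierFreq n k) / fp (fourierFreq n k)) (s : ℝ) :
    ((Fmat n)ᵀ * diagRPow n (Cmat n f fp) s * Fmat n).det = (Cmat n f fp).det ^ s := by
  rw [diagRPow_Cmat_conj, det_fourierMultiplier, Cmat, Matrix.det_diagonal,
    Real.finsetProd_rpow _ _ fun r _ ↦ (hc _ (by omega)).le]

lemma periodogram_eq_mul_periodogram_corrected (hn : n ≠ 0) {j : ℕ} (hj : j ≤ n / 2)
    (hcj : 0 < f (fourierFreq n j) / fp (fourierFreq n j)) (z : Fin n → ℝ) :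
    periodogram n (fourierFreq n j) z =
      f (fourierFreq n j) / fp (fourierFreq n j) * periodogram n (fourierFreq n j)
        (((Fmat n)ᵀ * diagRPow n (Cmat n f fp) (-(1 / 2)) * Fmat n) *ᵥ z) := by
  rw [diagRPow_Cmat_conj, periodogram_fourierMultiplier_mulVec hn _ hj]
  set c := f (fourierFreq n j) / fp (fourierFreq n j)
  have hsq : (c ^ (-(1 / 2) : ℝ)) ^ 2 = c⁻¹ := by
    rw [← Real.rpow_mul_natCast hcj.le, ← Real.rpow_neg_one]
    norm_num
  rw [hsq, mul_inv_cancel_left₀ hcj.ne']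

end Correction

theorem statement7_general {n : ℕ} (hn : n ≠ 0) (p : (Fin n → ℝ) → ENNReal) {f fp : ℝ → ℝ}
    (hc : ∀ k ≤ n / 2, 0 < f (fourierFreq n k) / fp (fourierFreq n k))
    {j : ℕ} (hj : j ≤ n / 2) :
    ∫⁻ z, ENNReal.ofReal (periodogram n (fourierFreq n j) z) *
        (ENNReal.ofReal ((Cmat n f fp).det ^ (-(1 : ℝ) / 2)) *
          p (((Fmat n)ᵀ * diagRPow n (Cmat n f fp) (-(1 / 2)) * Fmat n).mulVec z)) =
      ENNReal.ofReal (f (fourierFreq n j) / fp (fourierFreq n j)) *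
        ∫⁻ z, ENNReal.ofReal (periodogram n (fourierFreq n j) z) * p z := by
  have hdet := det_diagRPow_Cmat_conj hc (-(1 / 2))
  have hI := periodogram_eq_mul_periodogram_corrected (f := f) (fp := fp) hn hj (hc j hj)
  set M := (Fmat n)ᵀ * diagRPow n (Cmat n f fp) (-(1 / 2)) * Fmat n
  have hM : 0 < M.det := hdet ▸ Real.rpow_pos_of_pos (det_Cmat_pos hc) _
  have hL : LinearMap.det (Matrix.toLin' M) ≠ 0 := by rw [LinearMap.det_toLin']; exact hM.ne'
  have hchange := lintegral_abs_det_mul_comp volume hL fun z ↦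
    ENNReal.ofReal (periodogram n (fourierFreq n j) z) * p z
  rw [LinearMap.det_toLin', abs_of_pos hM] at hchange
  rw [neg_div, ← hdet, ← hchange, ← lintegral_const_mul' _ _ ENNReal.ofReal_ne_top]
  refine lintegral_congr fun z ↦ ?_
  rw [hI z, ENNReal.ofReal_mul (hc j hj).le, Matrix.toLin'_apply]
  ring

/-- exact identity for the expected periodogram under the corrected
likelihood, as Lebesgue integrals with values in `[0,∞]`. -/
theorem statement7 (n : ℕ) (hn : 1 ≤ n)
    (p : (Fin n → ℝ) → ENNReal) (hp_meas : Measurable p) (hp1 : ∫⁻ z, p z = 1)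
    (f fp : ℝ → ℝ)
    (hf : ∀ x ∈ Set.Icc 0 (2 * Real.pi), 0 < f x)
    (hfp : ∀ x ∈ Set.Icc 0 (2 * Real.pi), 0 < fp x)
    (j : ℕ) (hj : j ≤ n / 2) :
    ∫⁻ z, ENNReal.ofReal (periodogram n (fourierFreq n j) z) *
        (ENNReal.ofReal ((Cmat n f fp).det ^ (-(1 : ℝ) / 2)) *
          p (((Fmat n)ᵀ * diagRPow n (Cmat n f fp) (-(1 / 2)) * Fmat n).mulVec z)) =
      ENNReal.ofReal (f (fourierFreq n j) / fp (fourierFreq n j)) *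
        ∫⁻ z, ENNReal.ofReal (periodogram n (fourierFreq n j) z) * p z :=
  statement7_general (Nat.one_le_iff_ne_zero.1 hn) p (hj := hj) fun _ hk ↦
    have hmem := fourierFreq_mem_Icc (hk.trans (Nat.div_le_self n 2))
    div_pos (hf _ hmem) (hfp _ hmem)
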